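/- arXiv:1909.12691 — 3 statements merged into one kernel-verified Lean document; each statement's English description precedes it below -/
import Mathlib

section
/- Let A and B be finite sets, let P_A and P'_A be probability mass functions on A, and let k, k' : A → (pmf on B) be two channels. Suppose the joint distributions P(a,b) := P_A(a) k(b|a) and P'(a,b) := P'_A(a) k'(b|a) satisfy ‖P − P'‖₁ = ε. Then there exists a ∈ A such that ‖k(·|a) − k'(·|a)‖₁ ≤ 2ε, i.e., Σ_{b∈B} |k(b|a) − k'(b|a)| ≤ 2ε. -/
/-- If two joint distributions `P_A(a) k(b|a)` and `P'_A(a) k'(b|a)`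
are at L1 distance `ε`, then there is an `a` for which the channel outputs are
at L1 distance at most `2ε`. -/
theorem exists_conditional_L1_le {A B : Type*} [Fintype A] [Fintype B]
    (PA PA' : A → ℝ)
    (hPA : ∀ a, 0 ≤ PA a) (hPAsum : ∑ a : A, PA a = 1)
    (hPA' : ∀ a, 0 ≤ PA' a) (hPA'sum : ∑ a : A, PA' a = 1)
    (k k' : A → B → ℝ)
    (hk : ∀ a b, 0 ≤ k a b) (hksum : ∀ a, ∑ b : B, k a b = 1)
    (hk' : ∀ a b, 0 ≤ k' a b) (hk'sum : ∀ a, ∑ b : B, k' a b = 1)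
    (ε : ℝ)
    (hε : ∑ a : A, ∑ b : B, |PA a * k a b - PA' a * k' a b| = ε) :
    ∃ a : A, ∑ b : B, |k a b - k' a b| ≤ 2 * ε := by
  have key : ∀ a, PA a * ∑ b, |k a b - k' a b| ≤
      2 * ∑ b, |PA a * k a b - PA' a * k' a b| := by
    intro a
    have h1 : |PA a - PA' a| ≤ ∑ b, |PA a * k a b - PA' a * k' a b| := by
      have h := Finset.abs_sum_le_sum_abs (fun b => PA a * k a b - PA' a * k' a b) Finset.univ
      rwa [Finset.sum_sub_distrib, ← Finset.mul_sum, ← Finset.mul_sum, hksum, hk'sum,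
        mul_one, mul_one] at h
    have h2 : PA a * ∑ b, |k a b - k' a b| ≤
        ∑ b, (|PA a * k a b - PA' a * k' a b| + |PA a - PA' a| * k' a b) := by
      rw [Finset.mul_sum]
      refine Finset.sum_le_sum fun b _ => ?_
      have e1 : PA a * |k a b - k' a b| = |PA a * (k a b - k' a b)| := by
        rw [abs_mul, abs_of_nonneg (hPA a)]
      have e2 : |PA a - PA' a| * k' a b = |(PA a - PA' a) * k' a b| := by
        rw [abs_mul, abs_of_nonneg (hk' a b)]
      have e3 : PA a * (k a b - k' a b) =
          (PA a * k a b - PA' a * k' a b) - (PA a - PA' a) * k' a b := by ring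
      rw [e1, e2, e3]
      exact abs_sub _ _
    rw [Finset.sum_add_distrib, ← Finset.mul_sum, hk'sum] at h2
    linarith
  by_contra! hc
  have hsum : ∑ a, PA a * ∑ b, |k a b - k' a b| ≤ 2 * ε := by
    rw [← hε, Finset.mul_sum]
    exact Finset.sum_le_sum fun a _ => key a
  obtain ⟨a, -, ha⟩ : ∃ a ∈ Finset.univ, PA a ≠ 0 :=
    Finset.exists_ne_zero_of_sum_ne_zero (by rw [hPAsum]; exact one_ne_zero)
  have hlt : ∑ a, PA a * (2 * ε) < ∑ a, PA a * ∑ b, |k a b - k' a b| :=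
    Finset.sum_lt_sum (fun i _ => mul_le_mul_of_nonneg_left (hc i).le (hPA i))
      ⟨a, Finset.mem_univ a, mul_lt_mul_of_pos_left (hc a) (lt_of_le_of_ne (hPA a) ha.symm)⟩
  rw [← Finset.sum_mul, hPAsum] at hlt
  linarith
end

section
/- Error bound for the mismatch stochastic likelihood coder: Let A and B be finite sets, let P_{AB} be a pmf on A × B, let T_{A|B} be a channel from B to A (a pmf T_{A|B}(·|b) on A for each b ∈ B) such that T_{A|B}(a|b) > 0 whenever P_{AB}(a,b) > 0, let N ≥ 1, and let γ > 0. For a function φ : A → {1,…,N}, the mismatch stochastic likelihood coder is the channel T̂^φ(â | b, k) := T_{A|B}(â|b)·1{φ(â)=k} / Σ_{ā∈A} T_{A|B}(ā|b)·1{φ(ā)=k} (defined whenever the denominator is positive). Consider the experiment: (A,B) ~ P_{AB}, K := φ(A), and Â drawn according to T̂^φ(· | B, K); the error probability is P^φ[Â ≠ A]. Define S_γ := {(a,b) ∈ A × B : log₂ N − log₂(1/T_{A|B}(a|b)) > γ}. Then the expectation, over φ chosen uniformly at random among all functions A → {1,…,N}, of the error probability P^φ[Â ≠ A] is at most P_{AB}(S_γ^c)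 + 2^{−γ}. -/
theorem slc_card_collision {A : Type*} [Fintype A] [DecidableEq A] (N : ℕ) (hN : 1 ≤ N)
    (a a' : A) (h : a' ≠ a) :
    (N : ℝ) * ∑ φ : A → Fin N, (if φ a' = φ a then (1 : ℝ) else 0)
      = (Fintype.card (A → Fin N) : ℝ) := by
  have : NeZero N := ⟨by omega⟩
  have key : ∀ c : Fin N, ∑ φ : A → Fin N, (if φ a' = φ a then (1 : ℝ) else 0)
      = ∑ φ : A → Fin N, (if c = φ a - φ a' then (1 : ℝ) else 0) := by
    intro c
    let e : (A → Fin N) ≃ (A → Fin N) := Equiv.addRight (Pi.single a' c)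
    rw [← Equiv.sum_comp e]
    refine Finset.sum_congr rfl fun φ _ => ?_
    have h1 : e φ a' = φ a' + c := by simp [e]
    have h2 : e φ a = φ a := by simp [e, Pi.single_eq_of_ne h.symm]
    rw [h1, h2]
    congr 1
    rw [eq_sub_iff_add_eq, add_comm]
  have : (N : ℝ) * ∑ φ : A → Fin N, (if φ a' = φ a then (1 : ℝ) else 0)
      = ∑ c : Fin N, ∑ φ : A → Fin N, (if c = φ a - φ a' then (1 : ℝ) else 0) := by
    rw [← Finset.sum_congr rfl (fun c _ => key c)]
    simp
  rw [this, Finset.sum_comm]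
  simp

theorem slc_pointwise {A : Type*} [Fintype A] [DecidableEq A] (t : A → ℝ)
    (ht : ∀ a, 0 ≤ t a) (hs : ∑ a, t a = 1) (N : ℕ) (hN : 1 ≤ N) (a : A) (hpos : 0 < t a) :
    ∑ φ : A → Fin N, (1 - t a / ∑ a' : A, if φ a' = φ a then t a' else 0)
      ≤ (Fintype.card (A → Fin N) : ℝ) * (1 / (N * t a)) := by
  have hN' : (0 : ℝ) < N := by exact_mod_cast hN
  have h1 : ∀ φ : A → Fin N, (1 - t a / ∑ a' : A, if φ a' = φ a then t a' else 0)
      ≤ (1 / t a) * ∑ a' ∈ Finset.univ.erase a, t a' * (if φ a' = φ a then 1 else 0) := by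
    intro φ
    have e1 : (∑ a' : A, if φ a' = φ a then t a' else 0)
        = t a + ∑ a' ∈ Finset.univ.erase a, t a' * (if φ a' = φ a then 1 else 0) := by
      rw [← Finset.add_sum_erase _ _ (Finset.mem_univ a)]
      simp
    rw [e1]
    have hR : 0 ≤ ∑ a' ∈ Finset.univ.erase a, t a' * (if φ a' = φ a then (1 : ℝ) else 0) :=
      Finset.sum_nonneg fun x _ => mul_nonneg (ht x) (by split_ifs <;> norm_num)
    generalize (∑ a' ∈ Finset.univ.erase a, t a' * (if φ a' = φ a then (1 : ℝ) else 0)) = R at hR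
    have e2 : 1 - t a / (t a + R) = R / (t a + R) := by
      field_simp
      ring
    rw [e2, one_div_mul_eq_div]
    exact div_le_div_of_nonneg_left hR hpos (by linarith)
  refine (Finset.sum_le_sum fun φ _ => h1 φ).trans ?_
  rw [← Finset.mul_sum, Finset.sum_comm]
  have h2 : ∑ a' ∈ Finset.univ.erase a, ∑ φ : A → Fin N, t a' * (if φ a' = φ a then (1 : ℝ) else 0)
      = (∑ a' ∈ Finset.univ.erase a, t a') * ((Fintype.card (A → Fin N) : ℝ) / N) := by
    rw [Finset.sum_mul]
    refine Finset.sum_congr rfl fun x hx => ?_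
    rw [← Finset.mul_sum, ← slc_card_collision N hN a x (Finset.ne_of_mem_erase hx),
      mul_div_cancel_left₀ _ hN'.ne']
  rw [h2]
  have h3 : ∑ a' ∈ Finset.univ.erase a, t a' ≤ 1 := by
    rw [← hs]
    exact Finset.sum_le_sum_of_subset_of_nonneg (Finset.erase_subset _ _) fun x _ _ => ht x
  calc _ ≤ 1 / t a * (1 * ((Fintype.card (A → Fin N) : ℝ) / N)) := by gcongr
    _ = _ := by field_simp

/-- Error bound for the mismatch stochastic likelihood coder
(Yassaee–Aref–Gohari). The expected error probability of the mismatch SLC,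
over a uniformly random binning `φ : A → Fin N`, is at most
`P_{AB}(S_γᶜ) + 2^{-γ}`. -/
theorem mismatch_SLC_error_bound
    {A B : Type*} [Fintype A] [Fintype B] [DecidableEq A]
    (P : A × B → ℝ)
    (hP : ∀ x, 0 ≤ P x) (hPsum : ∑ x : A × B, P x = 1)
    (T : B → A → ℝ)
    (hT : ∀ b a, 0 ≤ T b a) (hTsum : ∀ b, ∑ a : A, T b a = 1)
    (hTpos : ∀ a b, 0 < P (a, b) → 0 < T b a)
    (N : ℕ) (hN : 1 ≤ N)
    (γ : ℝ) (hγ : 0 < γ) :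
    (Fintype.card (A → Fin N) : ℝ)⁻¹ *
        ∑ φ : A → Fin N, ∑ a : A, ∑ b : B,
          P (a, b) * (1 - T b a / ∑ a' : A, if φ a' = φ a then T b a' else 0)
      ≤ (∑ x ∈ Finset.univ.filter (fun x : A × B =>
            ¬(Real.logb 2 N - Real.logb 2 (1 / T x.2 x.1) > γ)), P x)
        + (2 : ℝ) ^ (-γ) := by
  have : NeZero N := ⟨by omega⟩
  have hN' : (0 : ℝ) < N := by exact_mod_cast hN
  have hC : (0 : ℝ) < (Fintype.card (A → Fin N) : ℝ) := by exact_mod_cast Fintype.card_pos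
  have h2 : (0 : ℝ) < (2 : ℝ) ^ (-γ) := Real.rpow_pos_of_pos two_pos _
  have e : ∑ φ : A → Fin N, ∑ a : A, ∑ b : B,
          P (a, b) * (1 - T b a / ∑ a' : A, if φ a' = φ a then T b a' else 0)
      = ∑ x : A × B, P x * ∑ φ : A → Fin N,
          (1 - T x.2 x.1 / ∑ a' : A, if φ a' = φ x.1 then T x.2 a' else 0) := by
    simp_rw [← Fintype.sum_prod_type' (f := fun a b => P (a, b) * _), Finset.mul_sum]
    rw [Finset.sum_comm]
  rw [e, inv_mul_le_iff₀ hC, Finset.sum_filter]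
  have hpt : ∀ x : A × B, P x * ∑ φ : A → Fin N,
          (1 - T x.2 x.1 / ∑ a' : A, if φ a' = φ x.1 then T x.2 a' else 0)
      ≤ (Fintype.card (A → Fin N) : ℝ) *
        ((if ¬(Real.logb 2 N - Real.logb 2 (1 / T x.2 x.1) > γ) then P x else 0)
          + P x * (2 : ℝ) ^ (-γ)) := by
    rintro ⟨a, b⟩
    rcases (hP (a, b)).eq_or_lt with h0 | h0
    · simp [← h0]
    have ht := hTpos a b h0
    simp only
    split_ifs with hS
    swap
    · have : ∑ φ : A → Fin N, (1 - T b a / ∑ a' : A, if φ a' = φ a then T b a' else 0)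
          ≤ (Fintype.card (A → Fin N) : ℝ) := by
        calc _ ≤ ∑ φ : A → Fin N, (1 : ℝ) := by
              refine Finset.sum_le_sum fun φ _ => ?_
              have : 0 ≤ T b a / ∑ a' : A, if φ a' = φ a then T b a' else 0 :=
                div_nonneg (hT b a) (Finset.sum_nonneg fun x _ => by
                  split_ifs
                  · exact hT b x
                  · exact le_rfl)
              linarith
          _ = _ := by simp
      have h3 := mul_le_mul_of_nonneg_left this h0.le
      have h4 := mul_pos hC (mul_pos h0 h2)
      linarith
    · have hp := slc_pointwise (T b) (hT b) (hTsum b) N hN a ht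
      have hlog : γ < Real.logb 2 (N * T b a) := by
        rw [Real.logb_mul hN'.ne' ht.ne']
        rw [one_div, Real.logb_inv] at hS
        linarith
      have hlt : (2 : ℝ) ^ γ < N * T b a :=
        (Real.lt_logb_iff_rpow_lt one_lt_two (mul_pos hN' ht)).1 hlog
      have h5 : 1 / (N * T b a) ≤ (2 : ℝ) ^ (-γ) := by
        rw [Real.rpow_neg two_pos.le, ← one_div]
        exact one_div_le_one_div_of_le (Real.rpow_pos_of_pos two_pos _) hlt.le
      have h6 := mul_le_mul_of_nonneg_left (hp.trans (mul_le_mul_of_nonneg_left h5 hC.le)) h0.le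
      linarith
  refine (Finset.sum_le_sum fun x _ => hpt x).trans (le_of_eq ?_)
  rw [← Finset.mul_sum, Finset.sum_add_distrib, ← Finset.sum_mul, hPsum, one_mul]
end

section
/- Derandomization of the extra common randomness: Let F and S be finite sets, let P and P' be pmfs on F × S, let Q_F denote the uniform pmf on F, and let R be a pmf on S. Suppose ‖P − Q_F ⊗ R‖₁ ≤ δ₁ and ‖P − P'‖₁ ≤ δ₂, where (Q_F ⊗ R)(f, s) := (1/|F|)·R(s). Then ‖Q_F ⊗ R − P'‖₁ ≤ δ₁ + δ₂, and there exists f ∈ F such that the marginal P'_F(f) := Σ_{s} P'(f, s) is positive and the conditional pmf P'_{S|F=f}(s) := P'(f, s)/P'_F(f) satisfies ‖R − P'_{S|F=f}‖₁ ≤ 2(δ₁ + δ₂). -/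
/-- Derandomization of the extra common randomness: if `P` is
`δ₁`-close to `Q_F ⊗ R` (uniform on `F` times `R`) and `δ₂`-close to `P'`,
then `Q_F ⊗ R` is `(δ₁+δ₂)`-close to `P'` and there is an instance `f ∈ F`
with positive marginal such that the conditional `P'_{S|F=f}` is
`2(δ₁+δ₂)`-close to `R`. -/
theorem derandomization_of_common_randomness
    {F S : Type*} [Fintype F] [Fintype S] [Nonempty F]
    (P P' : F × S → ℝ)
    (hP : ∀ x, 0 ≤ P x) (hPsum : ∑ x : F × S, P x = 1)
    (hP' : ∀ x, 0 ≤ P' x) (hP'sum : ∑ x : F × S, P' x = 1)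
    (R : S → ℝ) (hR : ∀ s, 0 ≤ R s) (hRsum : ∑ s : S, R s = 1)
    (δ₁ δ₂ : ℝ)
    (h1 : ∑ x : F × S, |P x - (Fintype.card F : ℝ)⁻¹ * R x.2| ≤ δ₁)
    (h2 : ∑ x : F × S, |P x - P' x| ≤ δ₂) :
    (∑ x : F × S, |(Fintype.card F : ℝ)⁻¹ * R x.2 - P' x| ≤ δ₁ + δ₂)
    ∧ ∃ f : F, 0 < (∑ s : S, P' (f, s)) ∧
        ∑ s : S, |R s - P' (f, s) / ∑ s' : S, P' (f, s')| ≤ 2 * (δ₁ + δ₂) := by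
  have hA : ∑ x : F × S, |(Fintype.card F : ℝ)⁻¹ * R x.2 - P' x| ≤ δ₁ + δ₂ := by
    refine le_trans ?_ (add_le_add h1 h2)
    rw [← Finset.sum_add_distrib]
    refine Finset.sum_le_sum fun x _ => ?_
    rw [abs_sub_comm (P x) ((Fintype.card F : ℝ)⁻¹ * R x.2)]
    exact abs_sub_le _ _ _
  refine ⟨hA, ?_⟩
  by_contra hcon
  push Not at hcon
  generalize (Fintype.card F : ℝ)⁻¹ = c at hA
  rw [Fintype.sum_prod_type] at hA hP'sum
  have hm0 : ∀ f, 0 ≤ ∑ s, P' (f, s) := fun f => Finset.sum_nonneg fun s _ => hP' _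
  -- twice the per-instance error dominates the weighted conditional error
  have hB : ∀ f, ∑ s, |(∑ s', P' (f, s')) * R s - P' (f, s)|
      ≤ 2 * ∑ s, |c * R s - P' (f, s)| := by
    intro f
    have e1 : |(∑ s', P' (f, s')) - c| ≤ ∑ s, |c * R s - P' (f, s)| := by
      have : c - (∑ s', P' (f, s')) = ∑ s, (c * R s - P' (f, s)) := by
        rw [Finset.sum_sub_distrib, ← Finset.mul_sum, hRsum, mul_one]
      rw [abs_sub_comm, this]
      exact Finset.abs_sum_le_sum_abs _ _
    have e2 : ∑ s, |(∑ s', P' (f, s')) * R s - P' (f, s)|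
        ≤ ∑ s, (|(∑ s', P' (f, s')) - c| * R s + |c * R s - P' (f, s)|) := by
      refine Finset.sum_le_sum fun s _ => ?_
      have := abs_sub_le ((∑ s', P' (f, s')) * R s) (c * R s) (P' (f, s))
      rwa [← sub_mul, abs_mul, abs_of_nonneg (hR s)] at this
    rw [Finset.sum_add_distrib, ← Finset.mul_sum, hRsum, mul_one] at e2
    linarith
  have hC : ∀ f, 0 < ∑ s, P' (f, s) → (∑ s, P' (f, s)) * (2 * (δ₁ + δ₂))
      < ∑ s, |(∑ s', P' (f, s')) * R s - P' (f, s)| := by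
    intro f hf
    have h := mul_lt_mul_of_pos_left (hcon f hf) hf
    refine h.trans_eq ?_
    rw [Finset.mul_sum]
    refine Finset.sum_congr rfl fun s _ => ?_
    rw [← abs_of_pos hf, ← abs_mul, abs_of_pos hf, mul_sub, mul_div_cancel₀ _ hf.ne']
  have hlt : ∑ f, (∑ s, P' (f, s)) * (2 * (δ₁ + δ₂))
      < ∑ f, ∑ s, |(∑ s', P' (f, s')) * R s - P' (f, s)| := by
    apply Finset.sum_lt_sum
    · intro f _
      rcases (hm0 f).eq_or_lt with h | h
      · rw [← h, zero_mul]
        exact Finset.sum_nonneg fun s _ => abs_nonneg _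
      · exact (hC f h).le
    · by_contra hno
      have hz : ∑ f, ∑ s, P' (f, s) ≤ 0 := Finset.sum_nonpos fun f hf =>
        not_lt.mp fun h => hno ⟨f, hf, hC f h⟩
      linarith
  have hle := Finset.sum_le_sum fun f (_ : f ∈ Finset.univ) => hB f
  rw [← Finset.mul_sum] at hle
  rw [← Finset.sum_mul, hP'sum] at hlt
  simp only at hA
  linarith
end
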